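/- (Busemann–Feller–Alexandrov theorem.) Let f : ℝ^d → ℝ be a convex function. Then for Lebesgue-almost every x ∈ ℝ^d there exist a vector p ∈ ℝ^d and a symmetric d × d real matrix Q such that lim_{h → 0} |f(x + h) − f(x) − ⟨p, h⟩ − (1/2)⟨Q h, h⟩| / ‖h‖² = 0; that is, f is second differentiable almost everywhere. -/

import Mathlib

open MeasureTheory Filter Metric
open scoped Topology ENNReal NNReal RealInnerProductSpace

/-- The quadratic form `⟨M y, y⟩` of a matrix `M`. -/
noncomputable def quadForm (d : ℕ) (M : Matrix (Fin d) (Fin d) ℝ)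
    (y : EuclideanSpace ℝ (Fin d)) : ℝ :=
  ∑ i, ∑ j, M i j * y i * y j

section aux

variable {E : Type*} [NormedAddCommGroup E] [InnerProductSpace ℝ E]

lemma bfa_subgrad [CompleteSpace E] {f : E → ℝ} (hf : ConvexOn ℝ Set.univ f) (hc : Continuous f) (x : E) :
    ∃ y : E, ∀ w, f x + ⟪y, w - x⟫ ≤ f w := by
  have hs1 : Convex ℝ {p : E × ℝ | p.1 ∈ (Set.univ : Set E) ∧ f p.1 < p.2} :=
    hf.convex_strict_epigraph
  have hs2 : IsOpen {p : E × ℝ | p.1 ∈ (Set.univ : Set E) ∧ f p.1 < p.2} := by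
    simp only [Set.mem_univ, true_and]
    exact isOpen_lt (by fun_prop) (by fun_prop)
  obtain ⟨g, hg⟩ := geometric_hahn_banach_open_point (x := (x, f x)) hs1 hs2 (by simp)
  simp only [Set.mem_univ, true_and, Set.mem_ofPred_eq, Prod.forall] at hg
  have hgd : ∀ w r, g (w, r) = g (w, 0) + r * g (0, 1) := by
    intro w r
    have : (w, r) = (w, (0:ℝ)) + r • ((0:E), (1:ℝ)) := by simp
    rw [this, map_add, map_smul, smul_eq_mul]
  set c := g (0, 1) with hcdef
  have hcneg : c < 0 := by
    have := hg x (f x + 1) (by linarith)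
    rw [hgd, hgd x (f x)] at this
    linarith
  let l : E →L[ℝ] ℝ := g.comp (ContinuousLinearMap.inl ℝ E ℝ)
  have hl : ∀ w, g (w, 0) = l w := fun w => rfl
  refine ⟨(InnerProductSpace.toDual ℝ E).symm ((-c⁻¹) • l), fun w => ?_⟩
  rw [InnerProductSpace.toDual_symm_apply]
  simp only [smul_apply, smul_eq_mul, map_sub]
  have key : l w + f w * c ≤ l x + f x * c := by
    apply le_of_forall_pos_le_add
    intro ε hε
    have := hg w (f w + ε / (-c)) (by have := div_pos hε (neg_pos.2 hcneg); linarith)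
    rw [hgd, hgd x (f x), hl, hl] at this
    have h2 : (f w + ε / (-c)) * c = f w * c - ε := by
      have := hcneg.ne
      field_simp
      ring
    rw [h2] at this
    linarith
  have h3 : c⁻¹ * c = 1 := inv_mul_cancel₀ hcneg.ne
  have h4 : c⁻¹ < 0 := inv_lt_zero.2 hcneg
  have h5 := mul_le_mul_of_nonpos_left key h4.le
  have e1 : c⁻¹ * (l w + f w * c) = c⁻¹ * l w + f w := by linear_combination f w * h3
  have e2 : c⁻¹ * (l x + f x * c) = c⁻¹ * l x + f x := by linear_combination f x * h3
  rw [e1, e2] at h5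
  linarith

lemma bfa_cont {f : E → ℝ} {y : E → E}
    (hy : ∀ x w, f x + ⟪y x, w - x⟫ ≤ f w) {x : E} (hd : DifferentiableAt ℝ f x) [CompleteSpace E] :
    ContinuousAt y x := by
  obtain ⟨f', hf'⟩ := hd
  set p := (InnerProductSpace.toDual ℝ E).symm f' with hp
  have hpp : ∀ v, f' v = ⟪p, v⟫ := fun v => by rw [hp, InnerProductSpace.toDual_symm_apply]
  have key : ∀ ε > 0, ∃ δ > 0, ∀ h : E, ‖h‖ ≤ δ → ‖y (x + h) - p‖ ≤ 3 * ε := by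
    intro ε hε
    have h1 := (hasFDerivAt_iff_isLittleO_nhds_zero.1 hf').def hε
    obtain ⟨δ, hδ, hb⟩ := Metric.eventually_nhds_iff.1 h1
    refine ⟨δ / 3, by positivity, fun h hh => ?_⟩
    set u := y (x + h) - p with hu
    by_cases hu0 : ‖u‖ = 0
    · rw [hu0]; positivity
    have hupos : 0 < ‖u‖ := lt_of_le_of_ne (norm_nonneg _) (Ne.symm hu0)
    set v := (δ / 3 / ‖u‖) • u with hv
    have hvn : ‖v‖ = δ / 3 := by
      rw [hv, norm_smul, Real.norm_of_nonneg (by positivity)]; field_simp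
    have huv : ⟪u, v⟫ = δ / 3 * ‖u‖ := by
      rw [hv, real_inner_smul_right, real_inner_self_eq_norm_sq]; field_simp
    have a1 := hb (y := h) (by rw [dist_zero_right]; linarith)
    have hhv : ‖h + v‖ ≤ 2 * (δ / 3) := (norm_add_le _ _).trans (by linarith)
    have a2 := hb (y := h + v) (by rw [dist_zero_right]; linarith)
    rw [hpp, Real.norm_eq_abs, abs_le] at a1 a2
    have a3 := hy (x + h) (x + (h + v))
    have a4 : x + (h + v) - (x + h) = v := by abel
    rw [a4] at a3
    have a5 : ⟪u, v⟫ = ⟪y (x + h), v⟫ - ⟪p, v⟫ := by rw [hu, inner_sub_left]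
    rw [inner_add_right] at a2
    have a6 : ε * ‖h‖ ≤ ε * (δ / 3) := by gcongr
    have a7 : ε * ‖h + v‖ ≤ ε * (2 * (δ / 3)) := by gcongr
    have : δ / 3 * ‖u‖ ≤ δ / 3 * (3 * ε) := by
      rw [← huv, a5]; linarith [a1.1, a2.2]
    exact le_of_mul_le_mul_left this (by positivity)
  have hyx : y x = p := by
    rw [← sub_eq_zero, ← norm_eq_zero]
    refine le_antisymm (le_of_forall_pos_le_add fun ε hε => ?_) (norm_nonneg _)
    obtain ⟨δ, hδ, h⟩ := key (ε / 3) (by positivity)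
    have := h 0 (by simpa using hδ.le)
    rw [add_zero] at this
    linarith
  rw [Metric.continuousAt_iff]
  intro ε hε
  obtain ⟨δ, hδ, h⟩ := key (ε / 4) (by positivity)
  refine ⟨δ, hδ, fun {w} hw => ?_⟩
  have := h (w - x) (by rw [← dist_eq_norm]; exact hw.le)
  rw [hyx, dist_eq_norm]
  rw [add_sub_cancel] at this
  linarith

lemma bfa_telescope (φ : ℝ → ℝ) (a b : ℝ)
    (h : ∀ s t, 0 ≤ s → s ≤ t → t ≤ 1 → |φ t - φ s| ≤ a * (t - s) + b * (t - s) ^ 2) :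
    |φ 1 - φ 0| ≤ a := by
  have key : ∀ n : ℕ, |φ 1 - φ 0| ≤ a + b * (1 / ((n : ℝ) + 1)) := by
    intro n
    have hn : (0 : ℝ) < n + 1 := by positivity
    have ind : ∀ k : ℕ, k ≤ n + 1 → |φ (k / ((n : ℝ) + 1)) - φ 0| ≤
        k * (a * (1 / ((n : ℝ) + 1)) + b * (1 / ((n : ℝ) + 1)) ^ 2) := by
      intro k
      induction k with
      | zero => intro _; simp
      | succ k ih =>
        intro hk
        have h1 := ih (by omega)
        have hk' : ((k : ℝ) + 1) ≤ n + 1 := by exact_mod_cast hk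
        have h2 := h (k / ((n : ℝ) + 1)) ((k + 1 : ℕ) / ((n : ℝ) + 1)) (by positivity)
          (by gcongr; simp) (by rw [div_le_one hn]; push_cast; exact hk')
        have e : ((k + 1 : ℕ) / ((n : ℝ) + 1)) - (k / ((n : ℝ) + 1)) = 1 / ((n : ℝ) + 1) := by
          push_cast; ring
        rw [e] at h2
        have h3 := abs_sub_le (φ ((k + 1 : ℕ) / ((n : ℝ) + 1))) (φ (k / ((n : ℝ) + 1))) (φ 0)
        push_cast at *
        linarith
    have h1 := ind (n + 1) le_rfl
    push_cast at h1
    rw [div_self hn.ne'] at h1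
    refine h1.trans (le_of_eq ?_)
    field_simp
  have lim : Tendsto (fun n : ℕ => a + b * (1 / ((n : ℝ) + 1))) atTop (𝓝 (a + b * 0)) :=
    (tendsto_one_div_add_atTop_nhds_zero_nat.const_mul b).const_add a
  have := ge_of_tendsto' lim key
  simpa using this

lemma bfa_expand {f : E → ℝ} {y : E → E}
    (hy : ∀ x w, f x + ⟪y x, w - x⟫ ≤ f w) {x : E} {A : E →L[ℝ] E} (hA : HasFDerivAt y A x) :
    Tendsto (fun h : E => |f (x + h) - f x - ⟪y x, h⟫ - (1 / 2) * ⟪A h, h⟫| / ‖h‖ ^ 2)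
      (𝓝[≠] 0) (𝓝 0) := by
  rw [Metric.tendsto_nhds]
  intro ε hε
  have h1 := (hasFDerivAt_iff_isLittleO_nhds_zero.1 hA).def (half_pos hε)
  obtain ⟨δ, hδ, hb⟩ := Metric.eventually_nhds_iff.1 h1
  rw [eventually_nhdsWithin_iff]
  filter_upwards [Metric.ball_mem_nhds (0 : E) hδ] with h hh hh0
  have hn : 0 < ‖h‖ := norm_pos_iff.2 hh0
  rw [mem_ball_zero_iff] at hh
  have est : ∀ s : ℝ, 0 ≤ s → s ≤ 1 →
      |⟪y (x + s • h), h⟫ - ⟪y x, h⟫ - s * ⟪A h, h⟫| ≤ ε / 2 * ‖h‖ ^ 2 := by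
    intro s hs0 hs1
    have hsn : ‖s • h‖ ≤ ‖h‖ := by
      rw [norm_smul, Real.norm_of_nonneg hs0]
      exact mul_le_of_le_one_left hn.le hs1
    have b1 := hb (y := s • h) (by rw [dist_zero_right]; linarith)
    have e : ⟪y (x + s • h), h⟫ - ⟪y x, h⟫ - s * ⟪A h, h⟫ =
        ⟪y (x + s • h) - y x - A (s • h), h⟫ := by
      rw [inner_sub_left, inner_sub_left, map_smul, real_inner_smul_left]
    rw [e]
    calc _ ≤ ‖y (x + s • h) - y x - A (s • h)‖ * ‖h‖ := abs_real_inner_le_norm _ _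
      _ ≤ (ε / 2 * ‖s • h‖) * ‖h‖ := by gcongr
      _ ≤ (ε / 2 * ‖h‖) * ‖h‖ := by gcongr
      _ = _ := by ring
  have main := bfa_telescope
    (fun t => f (x + t • h) - t * ⟪y x, h⟫ - t ^ 2 / 2 * ⟪A h, h⟫) (ε / 2 * ‖h‖ ^ 2)
    (|⟪A h, h⟫| / 2) (by
      intro s t hs hst ht
      have u1 := hy (x + s • h) (x + t • h)
      have u2 := hy (x + t • h) (x + s • h)
      have e1 : x + t • h - (x + s • h) = (t - s) • h := by rw [sub_smul]; abel
      have e2 : x + s • h - (x + t • h) = (-(t - s)) • h := by rw [neg_smul, sub_smul]; abel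
      rw [e1, real_inner_smul_right] at u1
      rw [e2, real_inner_smul_right] at u2
      have v1 := (abs_le.1 (est s hs (hst.trans ht))).1
      have v2 := (abs_le.1 (est t (hs.trans hst) ht)).2
      have hts : 0 ≤ t - s := sub_nonneg.2 hst
      have w1 := mul_le_mul_of_nonneg_left v1 hts
      have w2 := mul_le_mul_of_nonneg_left v2 hts
      have q1 : ⟪A h, h⟫ * (t - s) ^ 2 ≤ |⟪A h, h⟫| * (t - s) ^ 2 := by
        gcongr; exact le_abs_self _
      have q2 : -⟪A h, h⟫ * (t - s) ^ 2 ≤ |⟪A h, h⟫| * (t - s) ^ 2 := by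
        gcongr; exact neg_le_abs _
      rw [abs_le]
      constructor <;> nlinarith)
  simp only [one_smul, zero_smul, add_zero] at main
  have e3 : f (x + h) - 1 * ⟪y x, h⟫ - 1 ^ 2 / 2 * ⟪A h, h⟫ -
      (f x - 0 * ⟪y x, h⟫ - 0 ^ 2 / 2 * ⟪A h, h⟫) =
      f (x + h) - f x - ⟪y x, h⟫ - (1 / 2) * ⟪A h, h⟫ := by ring
  rw [e3] at main
  rw [dist_zero_right, Real.norm_of_nonneg (by positivity), div_lt_iff₀ (by positivity)]
  have : 0 < ε * ‖h‖ ^ 2 := by positivity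
  linarith

lemma bfa_ae_diff [FiniteDimensional ℝ E] [MeasurableSpace E] [BorelSpace E]
    (μ : Measure E) [μ.IsAddHaarMeasure] {f : E → ℝ} (hf : LocallyLipschitz f) :
    ∀ᵐ x ∂μ, DifferentiableAt ℝ f x := by
  rw [ae_iff]
  apply measure_null_of_locally_null
  intro x _
  obtain ⟨K, t, ht, hK⟩ := hf x
  have h2 : ∀ᵐ x ∂μ, x ∈ t → DifferentiableWithinAt ℝ f t x :=
    hK.ae_differentiableWithinAt_of_mem
  refine ⟨interior t ∩ {a | ¬DifferentiableAt ℝ f a}, ?_, ?_⟩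
  · rw [Set.inter_comm]
    exact inter_mem_nhdsWithin _ (interior_mem_nhds.2 ht)
  · rw [ae_iff] at h2
    refine measure_mono_null ?_ h2
    rintro a ⟨ha, hna⟩ h
    exact hna ((h (interior_subset ha)).differentiableAt (mem_interior_iff_mem_nhds.1 ha))

lemma bfa_ae_inv [FiniteDimensional ℝ E] [MeasurableSpace E] [BorelSpace E]
    (μ : Measure E) [μ.IsAddHaarMeasure] {z g : E → E} {K : ℝ≥0} (hg : LipschitzWith K g)
    (hgz : ∀ x, g (z x) = x) :
    ∀ᵐ x ∂μ, DifferentiableAt ℝ g (z x) ∧ (fderiv ℝ g (z x)).det ≠ 0 := by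
  have N1 : μ (g '' {w | ¬ DifferentiableAt ℝ g w}) = 0 := by
    let ν : Measure E := Measure.hausdorffMeasure (Module.finrank ℝ E)
    have h0 : ν {w | ¬ DifferentiableAt ℝ g w} = 0 := hg.ae_differentiableAt
    have h1 : ν (g '' {w | ¬ DifferentiableAt ℝ g w}) = 0 := by
      refine le_antisymm ?_ zero_le
      refine (hg.hausdorffMeasure_image_le (by positivity) _).trans ?_
      change _ * ν _ ≤ _
      rw [h0, mul_zero]
    exact (Measure.absolutelyContinuous_isAddHaarMeasure μ ν) h1
  have N2 : μ (g '' {w | DifferentiableAt ℝ g w ∧ (fderiv ℝ g w).det = 0}) = 0 :=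
    addHaar_image_eq_zero_of_det_fderivWithin_eq_zero μ (f' := fderiv ℝ g)
      (fun w hw => hw.1.hasFDerivAt.hasFDerivWithinAt) (fun w hw => hw.2)
  rw [ae_iff]
  refine measure_mono_null ?_ (measure_union_null N1 N2)
  intro x hx
  by_cases hd : DifferentiableAt ℝ g (z x)
  · right
    refine ⟨z x, ⟨hd, ?_⟩, hgz x⟩
    by_contra h
    exact hx ⟨hd, h⟩
  · left
    exact ⟨z x, hd, hgz x⟩

lemma bfa_main [FiniteDimensional ℝ E] [MeasurableSpace E] [BorelSpace E]
    (μ : Measure E) [μ.IsAddHaarMeasure] {f : E → ℝ} (hf : ConvexOn ℝ Set.univ f) :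
    ∀ᵐ x ∂μ, ∃ (p : E) (A : E →L[ℝ] E),
      Tendsto (fun h : E => |f (x + h) - f x - ⟪p, h⟫ - (1 / 2) * ⟪A h, h⟫| / ‖h‖ ^ 2)
      (𝓝[≠] 0) (𝓝 0) := by
  have : CompleteSpace E := FiniteDimensional.complete ℝ E
  have hL : LocallyLipschitz f := hf.locallyLipschitz
  choose y hy using bfa_subgrad hf hL.continuous
  let z : E → E := fun x => x + y x
  have hmono : ∀ x w, ‖x - w‖ ≤ ‖z x - z w‖ := by
    intro x w
    have h1 := hy x w
    have h2 := hy w x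
    have h3 : ⟪y x - y w, x - w⟫ = -⟪y x, w - x⟫ - ⟪y w, x - w⟫ := by
      rw [inner_sub_left, ← neg_sub w x, inner_neg_right, inner_neg_right]
    have h4 : z x - z w = (x - w) + (y x - y w) := by simp only [z]; abel
    have h5 := norm_add_sq_real (x - w) (y x - y w)
    rw [real_inner_comm, h3, ← h4] at h5
    refine le_of_sq_le_sq ?_ (norm_nonneg _)
    nlinarith [sq_nonneg ‖y x - y w‖]
  have hinj : Function.Injective z := fun x w h => by
    have := hmono x w
    rw [h, sub_self, norm_zero] at this
    exact sub_eq_zero.1 (norm_le_zero_iff.1 this)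
  have hlip : LipschitzOnWith 1 (Function.invFun z) (Set.range z) := by
    apply LipschitzOnWith.of_dist_le_mul
    rintro _ ⟨a, rfl⟩ _ ⟨b, rfl⟩
    rw [Function.leftInverse_invFun hinj, Function.leftInverse_invFun hinj, dist_eq_norm,
      dist_eq_norm]
    simpa using hmono a b
  obtain ⟨g, hg, hge⟩ := hlip.extend_finite_dimension
  have hgz : ∀ x, g (z x) = x := fun x => by
    rw [← hge (Set.mem_range_self x), Function.leftInverse_invFun hinj]
  filter_upwards [bfa_ae_diff μ hL, bfa_ae_inv μ hg hgz] with x hx1 hx2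
  have hyc := bfa_cont hy hx1
  have hzc : ContinuousAt z x := continuousAt_id.add hyc
  have hz : HasFDerivAt z (((fderiv ℝ g (z x)).toContinuousLinearEquivOfDetNeZero hx2.2).symm :
      E →L[ℝ] E) x := by
    refine HasFDerivAt.of_local_left_inverse hzc ?_ (Eventually.of_forall hgz)
    rw [ContinuousLinearMap.coe_toContinuousLinearEquivOfDetNeZero]
    exact hx2.1.hasFDerivAt
  have hy' := hz.sub (hasFDerivAt_id x)
  have hyz : z - id = y := by ext1 a; simp [z]
  refine ⟨y x, _, bfa_expand hy (A := _) (by rw [← hyz]; exact hy')⟩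

end aux

/-- Busemann–Feller–Alexandrov theorem: a convex function on `ℝ^d` is twice
differentiable (in the Peano sense) at Lebesgue-almost every point. -/
theorem busemann_feller_alexandrov (d : ℕ)
    (f : EuclideanSpace ℝ (Fin d) → ℝ) (hf : ConvexOn ℝ Set.univ f) :
    ∀ᵐ x ∂(volume : Measure (EuclideanSpace ℝ (Fin d))),
      ∃ (p : EuclideanSpace ℝ (Fin d)) (Q : Matrix (Fin d) (Fin d) ℝ),
        Q.IsSymm ∧
        Filter.Tendsto
          (fun h : EuclideanSpace ℝ (Fin d) =>
            |f (x + h) - f x - ⟪p, h⟫ - (1 / 2) * quadForm d Q h| / ‖h‖ ^ 2)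
          (nhdsWithin 0 {(0 : EuclideanSpace ℝ (Fin d))}ᶜ) (nhds 0) := by
  filter_upwards [bfa_main volume hf] with x hx
  obtain ⟨p, A, hA⟩ := hx
  let B : Matrix (Fin d) (Fin d) ℝ := fun i j => A (EuclideanSpace.single j 1) i
  have hB : ∀ h : EuclideanSpace ℝ (Fin d), ⟪A h, h⟫ = ∑ i, ∑ j, B i j * h i * h j := by
    intro h
    have e : h = ∑ j, h j • EuclideanSpace.single j (1 : ℝ) := by
      ext i
      simp [Finset.sum_apply, Pi.single_apply]
    have e2 : ∀ i, A h i = ∑ j, h j * B i j := by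
      intro i
      conv_lhs => rw [e, map_sum]
      simp [B]
    rw [PiLp.inner_apply]
    refine Finset.sum_congr rfl fun i _ => ?_
    rw [e2]
    simp only [RCLike.inner_apply, conj_trivial, Finset.mul_sum]
    exact Finset.sum_congr rfl fun j _ => by ring
  refine ⟨p, fun i j => (B i j + B j i) / 2, ?_, ?_⟩
  · ext i j
    change (B j i + B i j) / 2 = (B i j + B j i) / 2
    ring
  · have hq : ∀ h, quadForm d (fun i j => (B i j + B j i) / 2) h = ⟪A h, h⟫ := by
      intro h
      have s : ∑ i, ∑ j, B j i * h i * h j = ∑ i, ∑ j, B i j * h i * h j := by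
        rw [Finset.sum_comm]
        exact Finset.sum_congr rfl fun i _ => Finset.sum_congr rfl fun j _ => by ring
      have t : quadForm d (fun i j => (B i j + B j i) / 2) h =
          (∑ i, ∑ j, B i j * h i * h j + ∑ i, ∑ j, B j i * h i * h j) / 2 := by
        unfold quadForm
        simp only [← Finset.sum_add_distrib, Finset.sum_div]
        exact Finset.sum_congr rfl fun i _ => Finset.sum_congr rfl fun j _ => by ring
      rw [t, s, hB]
      ring
    simp only [hq]
    exact hA
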